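/- For every integer $m \ge 1$ there exists a constant $C = C(m) > 0$ such that for every function $g$ three times continuously differentiable on $[-1,1]$ with $g(-1)=g(1)=0$, one has $\sup_{y \in (-1,1)} \frac{|g(y)|^m}{1-y^2} \le C\, E(g)^{\frac{m}{2}-\frac{1}{4}}\, D(g)^{1/4}$. -/

import Mathlib

open MeasureTheory Set
open scoped ENNReal

/-- Derivative on the interval `[-1, 1]`. -/
noncomputable def dI (f : ℝ → ℝ) : ℝ → ℝ := derivWithin f (Icc (-1) 1)

/-- The energy `E(g) = (1/2) ∫_{-1}^{1} g'(y)^2 dy`. -/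
noncomputable def energy (g : ℝ → ℝ) : ℝ :=
  (1/2) * ∫ y in Ioo (-1:ℝ) 1, (dI g y) ^ 2

/-- The dissipation `D(g) = 8 ∫_{-1}^{1} g''(y)^2 dy + (1/2) ∫_{-1}^{1} (1-y^2) g'''(y)^2 dy`. -/
noncomputable def dissipation (g : ℝ → ℝ) : ℝ :=
  8 * (∫ y in Ioo (-1:ℝ) 1, (dI (dI g) y) ^ 2)
    + (1/2) * ∫ y in Ioo (-1:ℝ) 1, (1 - y ^ 2) * (dI (dI (dI g)) y) ^ 2

/-!
Since `g` vanishes at both ends, Rolle gives a zero `c` of `g'`, and integrating `(g' ^ 2)'` from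
`c` with Cauchy–Schwarz yields `‖g'‖_∞ ^ 4 ≤ 4 (∫ g' ^ 2) (∫ g'' ^ 2) ≤ E(g) D(g)`. As `g` is
`‖g'‖_∞`-Lipschitz and the distance from `y` to the nearer end is `1 - |y| ≤ 1 - y ^ 2`, this
bounds `|g| / (1 - y ^ 2)` by `(E(g) D(g)) ^ (1 / 4)`. The remaining `m - 1` factors of `|g|`
are at most `2 √E(g)` each, again by Cauchy–Schwarz.
-/

section Interval

lemma sq_integral_abs_mul_le {α : Type*} [MeasurableSpace α] {μ : Measure α} {f g : α → ℝ}
    (hf : MemLp f 2 μ) (hg : MemLp g 2 μ) :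
    (∫ x, |f x * g x| ∂μ) ^ 2 ≤ (∫ x, f x ^ 2 ∂μ) * ∫ x, g x ^ 2 ∂μ := by
  have holder : ∫ x, |f x * g x| ∂μ ≤ √(∫ x, f x ^ 2 ∂μ) * √(∫ x, g x ^ 2 ∂μ) := by
    simpa [abs_mul, Real.sqrt_eq_rpow] using integral_mul_norm_le_Lp_mul_Lq (E := ℝ)
      Real.HolderConjugate.two_two (by simpa using hf) (by simpa using hg)
  calc (∫ x, |f x * g x| ∂μ) ^ 2
      ≤ (√(∫ x, f x ^ 2 ∂μ) * √(∫ x, g x ^ 2 ∂μ)) ^ 2 := by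
        have : 0 ≤ ∫ x, |f x * g x| ∂μ := integral_nonneg fun _ => abs_nonneg _
        gcongr
    _ = (∫ x, f x ^ 2 ∂μ) * ∫ x, g x ^ 2 ∂μ := by
        rw [mul_pow, Real.sq_sqrt (integral_nonneg fun _ => sq_nonneg _),
          Real.sq_sqrt (integral_nonneg fun _ => sq_nonneg _)]

variable {E : Type*} [NormedAddCommGroup E] {a b c x y : ℝ}

lemma memLp_Ioo_of_continuousOn_Icc {f : ℝ → E} {p : ℝ≥0∞} (hf : ContinuousOn f (Icc a b)) :
    MemLp f p (volume.restrict (Ioo a b)) := by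
  obtain ⟨M, hM⟩ := isCompact_Icc.exists_bound_of_continuousOn hf
  exact MemLp.of_bound
    ((hf.mono Ioo_subset_Icc_self).aestronglyMeasurable measurableSet_Ioo) M
    (ae_restrict_of_forall_mem measurableSet_Ioo fun t ht => hM t (Ioo_subset_Icc_self ht))

variable [NormedSpace ℝ E]

lemma norm_sub_le_setIntegral_norm {f f' : ℝ → E} (hf : ContinuousOn f (Icc a b))
    (hf' : ∀ t ∈ Ioo a b, HasDerivAt f (f' t) t) (hint : IntegrableOn f' (Ioo a b))
    (hx : x ∈ Icc a b) (hy : y ∈ Icc a b) :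
    ‖f y - f x‖ ≤ ∫ t in Ioo a b, ‖f' t‖ := by
  wlog hxy : x ≤ y generalizing x y
  · rw [norm_sub_rev]
    exact this hy hx (le_of_not_ge hxy)
  have hsub : Ioo x y ⊆ Ioo a b := Ioo_subset_Ioo hx.1 hy.2
  calc ‖f y - f x‖ ≤ ∫ t in x..y, ‖f' t‖ :=
        norm_sub_le_integral_of_norm_deriv_le_of_le hxy (hf.mono (Icc_subset_Icc hx.1 hy.2))
          (fun t ht => (hf' t (hsub ht)).differentiableAt.differentiableWithinAt)
          (.of_forall fun t ht => by rw [(hf' t (hsub ht)).deriv])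
          ((intervalIntegrable_iff_integrableOn_Ioo_of_le hxy).2 (hint.mono_set hsub).norm)
    _ = ∫ t in Ioo x y, ‖f' t‖ := by
        rw [intervalIntegral.integral_of_le hxy, integral_Ioc_eq_integral_Ioo]
    _ ≤ ∫ t in Ioo a b, ‖f' t‖ :=
        setIntegral_mono_set hint.norm (.of_forall fun _ => norm_nonneg _) hsub.eventuallyLE

lemma sq_norm_sub_le_mul_setIntegral_sq_norm {f f' : ℝ → E} (hf : ContinuousOn f (Icc a b))
    (hf' : ∀ t ∈ Ioo a b, HasDerivAt f (f' t) t) (hL2 : MemLp f' 2 (volume.restrict (Ioo a b)))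
    (hx : x ∈ Icc a b) (hy : y ∈ Icc a b) :
    ‖f y - f x‖ ^ 2 ≤ (b - a) * ∫ t in Ioo a b, ‖f' t‖ ^ 2 := by
  have hab : a ≤ b := hx.1.trans hx.2
  calc ‖f y - f x‖ ^ 2 ≤ (∫ t in Ioo a b, |1 * ‖f' t‖|) ^ 2 := by
        gcongr
        simpa using norm_sub_le_setIntegral_norm hf hf' (hL2.integrable one_le_two) hx hy
    _ ≤ (∫ _ in Ioo a b, (1 : ℝ) ^ 2) * ∫ t in Ioo a b, ‖f' t‖ ^ 2 :=
        sq_integral_abs_mul_le (memLp_const 1) hL2.norm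
    _ = (b - a) * ∫ t in Ioo a b, ‖f' t‖ ^ 2 := by simp [hab]

lemma pow_four_le_setIntegral_sq_mul_setIntegral_sq {f f' : ℝ → ℝ}
    (hf : ContinuousOn f (Icc a b))
    (hf' : ∀ t ∈ Ioo a b, HasDerivAt f (f' t) t) (hL2 : MemLp f' 2 (volume.restrict (Ioo a b)))
    (hc : c ∈ Icc a b) (hfc : f c = 0) (hx : x ∈ Icc a b) :
    f x ^ 4 ≤ 4 * ((∫ t in Ioo a b, f t ^ 2) * ∫ t in Ioo a b, f' t ^ 2) := by
  have hfL2 : MemLp f 2 (volume.restrict (Ioo a b)) := memLp_Ioo_of_continuousOn_Icc hf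
  have hderiv : ∀ t ∈ Ioo a b, HasDerivAt (f ^ 2) (2 * (f t * f' t)) t :=
    fun t ht => by simpa [mul_assoc] using (hf' t ht).pow 2
  have hsq : f x ^ 2 ≤ 2 * ∫ t in Ioo a b, |f t * f' t| := by
    simpa [hfc, integral_const_mul] using
      norm_sub_le_setIntegral_norm (hf.pow 2) hderiv ((hfL2.integrable_mul hL2).const_mul 2) hc hx
  calc f x ^ 4 = (f x ^ 2) ^ 2 := by ring
    _ ≤ (2 * ∫ t in Ioo a b, |f t * f' t|) ^ 2 := by gcongr
    _ = 4 * (∫ t in Ioo a b, |f t * f' t|) ^ 2 := by ring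
    _ ≤ 4 * ((∫ t in Ioo a b, f t ^ 2) * ∫ t in Ioo a b, f' t ^ 2) := by
        gcongr
        exact sq_integral_abs_mul_le hfL2 hL2

lemma norm_le_mul_min_of_norm_derivWithin_le {f : ℝ → E} {M : ℝ}
    (hf : DifferentiableOn ℝ f (Icc a b))
    (hM : ∀ t ∈ Icc a b, ‖derivWithin f (Icc a b) t‖ ≤ M) (hfa : f a = 0) (hfb : f b = 0)
    (hx : x ∈ Icc a b) : ‖f x‖ ≤ M * min (x - a) (b - x) := by
  have hab : a ≤ b := hx.1.trans hx.2
  have hM0 : 0 ≤ M := (norm_nonneg _).trans (hM x hx)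
  have hlip := fun t ht =>
    (convex_Icc a b).norm_image_sub_le_of_norm_derivWithin_le hf hM (x := t) ht hx
  rw [mul_min_of_nonneg _ _ hM0]
  refine le_min ?_ ?_
  · simpa [hfa, abs_of_nonneg (sub_nonneg.2 hx.1)] using hlip a (left_mem_Icc.2 hab)
  · simpa [hfb, abs_of_nonpos (sub_nonpos.2 hx.2)] using hlip b (right_mem_Icc.2 hab)

end Interval

/-- The second-order part `8 ∫_{-1}^{1} g''(y)^2 dy` of the dissipation, the only part
that enters the bound on `g'`. -/
noncomputable def bendingDissipation (g : ℝ → ℝ) : ℝ :=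
  8 * ∫ y in Ioo (-1 : ℝ) 1, dI (dI g) y ^ 2

lemma energy_nonneg (g : ℝ → ℝ) : 0 ≤ energy g :=
  mul_nonneg (by norm_num) (integral_nonneg fun _ => sq_nonneg _)

lemma bendingDissipation_nonneg (g : ℝ → ℝ) : 0 ≤ bendingDissipation g :=
  mul_nonneg (by norm_num) (integral_nonneg fun _ => sq_nonneg _)

lemma one_sub_sq_pos {y : ℝ} (hy : y ∈ Ioo (-1 : ℝ) 1) : 0 < 1 - y ^ 2 := by
  nlinarith [hy.1, hy.2]

lemma bendingDissipation_le_dissipation (g : ℝ → ℝ) : bendingDissipation g ≤ dissipation g :=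
  le_add_of_nonneg_right <| mul_nonneg (by norm_num) <| setIntegral_nonneg measurableSet_Ioo
    fun _ hy => mul_nonneg (one_sub_sq_pos hy).le (sq_nonneg _)

lemma min_add_one_one_sub_le_one_sub_sq {y : ℝ} (hy : y ∈ Icc (-1 : ℝ) 1) :
    min (y - -1) (1 - y) ≤ 1 - y ^ 2 := by
  rcases le_total 0 y with h | h
  · exact (min_le_right _ _).trans (by nlinarith [hy.2])
  · exact (min_le_left _ _).trans (by nlinarith [hy.1])

section Profile

variable {g : ℝ → ℝ} {y : ℝ}

lemma contDiffOn_dI {n : WithTop ℕ∞} (hg : ContDiffOn ℝ (n + 1) g (Icc (-1) 1)) :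
    ContDiffOn ℝ n (dI g) (Icc (-1) 1) :=
  hg.derivWithin (uniqueDiffOn_Icc (by norm_num)) le_rfl

lemma hasDerivAt_dI (hg : DifferentiableOn ℝ g (Icc (-1) 1)) (hy : y ∈ Ioo (-1 : ℝ) 1) :
    HasDerivAt g (dI g y) y :=
  (hg y (Ioo_subset_Icc_self hy)).hasDerivWithinAt.hasDerivAt (Icc_mem_nhds hy.1 hy.2)

lemma abs_le_two_mul_sqrt_energy (hg : ContDiffOn ℝ 1 g (Icc (-1) 1)) (hleft : g (-1) = 0)
    (hy : y ∈ Icc (-1 : ℝ) 1) : |g y| ≤ 2 * √(energy g) := by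
  have hdI : ContinuousOn (dI g) (Icc (-1) 1) :=
    (contDiffOn_dI (n := 0) (by simpa using hg)).continuousOn
  have hsq : ‖g y - g (-1)‖ ^ 2 ≤ (1 - -1) * ∫ t in Ioo (-1 : ℝ) 1, ‖dI g t‖ ^ 2 :=
    sq_norm_sub_le_mul_setIntegral_sq_norm hg.continuousOn
      (fun _ => hasDerivAt_dI (hg.differentiableOn one_ne_zero))
      (memLp_Ioo_of_continuousOn_Icc hdI) (left_mem_Icc.2 (by norm_num)) hy
  refine abs_le_of_sq_le_sq ?_ (by positivity)
  calc g y ^ 2 ≤ 4 * energy g := by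
        simp only [hleft, sub_zero, Real.norm_eq_abs, sq_abs] at hsq
        rw [energy]
        linarith
    _ = (2 * √(energy g)) ^ 2 := by
        rw [mul_pow, Real.sq_sqrt (energy_nonneg g)]
        norm_num

lemma abs_dI_le_rpow_energy_mul_bendingDissipation (hg : ContDiffOn ℝ 2 g (Icc (-1) 1))
    (hends : g (-1) = g 1) (hy : y ∈ Icc (-1 : ℝ) 1) :
    |dI g y| ≤ (energy g * bendingDissipation g) ^ (1 / 4 : ℝ) := by
  have hg' : ContDiffOn ℝ 1 (dI g) (Icc (-1) 1) :=
    contDiffOn_dI (by simpa [one_add_one_eq_two] using hg)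
  have hg'' : ContinuousOn (dI (dI g)) (Icc (-1) 1) :=
    (contDiffOn_dI (n := 0) (by simpa using hg')).continuousOn
  obtain ⟨c, hc, hgc⟩ : ∃ c ∈ Ioo (-1 : ℝ) 1, dI g c = 0 :=
    exists_hasDerivAt_eq_zero (by norm_num) hg.continuousOn hends
      fun _ => hasDerivAt_dI (hg.differentiableOn two_ne_zero)
  have hpow : dI g y ^ 4 ≤ energy g * bendingDissipation g := by
    have := pow_four_le_setIntegral_sq_mul_setIntegral_sq hg'.continuousOn
      (fun _ => hasDerivAt_dI (hg'.differentiableOn one_ne_zero))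
      (memLp_Ioo_of_continuousOn_Icc hg'') (Ioo_subset_Icc_self hc) hgc hy
    rw [energy, bendingDissipation]
    linarith
  calc |dI g y| = (dI g y ^ 4) ^ (1 / 4 : ℝ) := by
        rw [← Even.pow_abs (by decide : Even 4)]
        simpa using (Real.pow_rpow_inv_natCast (abs_nonneg (dI g y)) four_ne_zero).symm
    _ ≤ (energy g * bendingDissipation g) ^ (1 / 4 : ℝ) := by gcongr

lemma abs_div_one_sub_sq_le (hg : ContDiffOn ℝ 2 g (Icc (-1) 1)) (hleft : g (-1) = 0)
    (hright : g 1 = 0) (hy : y ∈ Ioo (-1 : ℝ) 1) :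
    |g y| / (1 - y ^ 2) ≤ (energy g * bendingDissipation g) ^ (1 / 4 : ℝ) := by
  have hEB := mul_nonneg (energy_nonneg g) (bendingDissipation_nonneg g)
  rw [div_le_iff₀ (one_sub_sq_pos hy)]
  calc |g y|
      ≤ (energy g * bendingDissipation g) ^ (1 / 4 : ℝ) * min (y - -1) (1 - y) :=
        norm_le_mul_min_of_norm_derivWithin_le (hg.differentiableOn two_ne_zero)
          (fun _ => abs_dI_le_rpow_energy_mul_bendingDissipation hg (hleft.trans hright.symm))
          hleft hright (Ioo_subset_Icc_self hy)
    _ ≤ (energy g * bendingDissipation g) ^ (1 / 4 : ℝ) * (1 - y ^ 2) := by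
        gcongr
        exact min_add_one_one_sub_le_one_sub_sq (Ioo_subset_Icc_self hy)

theorem power_over_weight_sup_general {p : ℝ} (hp : 1 ≤ p) (hg : ContDiffOn ℝ 2 g (Icc (-1) 1))
    (hleft : g (-1) = 0) (hright : g 1 = 0) (hy : y ∈ Ioo (-1 : ℝ) 1) :
    |g y| ^ p / (1 - y ^ 2) ≤
      2 ^ (p - 1) * energy g ^ (p / 2 - 1 / 4) * bendingDissipation g ^ (1 / 4 : ℝ) := by
  have hE := energy_nonneg g
  have hp' : 0 ≤ p - 1 := sub_nonneg.2 hp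
  have hw := (one_sub_sq_pos hy).le
  have hE_rpow : √(energy g) ^ (p - 1) * energy g ^ (1 / 4 : ℝ) = energy g ^ (p / 2 - 1 / 4) := by
    rw [Real.sqrt_eq_rpow, ← Real.rpow_mul hE,
      ← Real.rpow_add_of_nonneg hE (mul_nonneg one_half_pos.le hp') (by norm_num)]
    ring_nf
  calc |g y| ^ p / (1 - y ^ 2) = |g y| ^ (p - 1) * (|g y| / (1 - y ^ 2)) := by
        rw [← mul_div_assoc, ← Real.rpow_add_one' (abs_nonneg _) (by linarith), sub_add_cancel]
    _ ≤ (2 * √(energy g)) ^ (p - 1) * (energy g * bendingDissipation g) ^ (1 / 4 : ℝ) := by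
        gcongr
        · exact abs_le_two_mul_sqrt_energy (hg.of_le one_le_two) hleft (Ioo_subset_Icc_self hy)
        · exact abs_div_one_sub_sq_le hg hleft hright hy
    _ = 2 ^ (p - 1) * energy g ^ (p / 2 - 1 / 4) * bendingDissipation g ^ (1 / 4 : ℝ) := by
        rw [Real.mul_rpow zero_le_two (Real.sqrt_nonneg _),
          Real.mul_rpow hE (bendingDissipation_nonneg g), ← hE_rpow]
        ring

end Profile

/-- **Lemma 3.11**: for every integer `m ≥ 1`,
`‖g^m / (1-y²)‖_{L^∞(-1,1)} ≲ E(g)^{m/2 - 1/4} D(g)^{1/4}`. -/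
theorem power_over_weight_sup (m : ℕ) (hm : 1 ≤ m) :
    ∃ C > (0:ℝ), ∀ g : ℝ → ℝ, ContDiffOn ℝ 3 g (Icc (-1) 1) →
      g (-1) = 0 → g 1 = 0 →
      ∀ y ∈ Ioo (-1:ℝ) 1, |g y| ^ m / (1 - y ^ 2) ≤
        C * energy g ^ ((m:ℝ)/2 - 1/4) * dissipation g ^ ((1:ℝ)/4) := by
  refine ⟨2 ^ ((m : ℝ) - 1), by positivity, fun g hg hleft hright y hy => ?_⟩
  have hE := energy_nonneg g
  have hB := bendingDissipation_nonneg g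
  calc |g y| ^ m / (1 - y ^ 2)
      ≤ 2 ^ ((m : ℝ) - 1) * energy g ^ ((m : ℝ) / 2 - 1 / 4)
          * bendingDissipation g ^ (1 / 4 : ℝ) := by
        rw [← Real.rpow_natCast]
        exact power_over_weight_sup_general (mod_cast hm) (hg.of_le (by norm_num)) hleft hright hy
    _ ≤ 2 ^ ((m : ℝ) - 1) * energy g ^ ((m : ℝ) / 2 - 1 / 4) * dissipation g ^ (1 / 4 : ℝ) := by
        gcongr
        exact bendingDissipation_le_dissipation g
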